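/- Let H be a real Hilbert space, let C : H →L H be a continuous linear operator that is coercive, i.e., there is α > 0 with ⟨C v, v⟩ ≥ α‖v‖² for all v ∈ H, and let K : H →L H be a compact operator. Set B = C + K and let B† denote the Hilbert-space adjoint of B. Then B is injective if and only if B† is injective. -/

import Mathlib

open RealInnerProductSpace

/-! A coercive operator is invertible (Lax–Milgram), and for invertible `C` and compact `K` the
factorization `C + K = C (1 + C⁻¹ K)` reduces injectivity of `C + K` to the statement that `-1` is
not an eigenvalue of the compact operator `C⁻¹ K`. By the Fredholm alternative, an injective
`C + K` is therefore surjective, so its adjoint is injective. Since `C†` is invertible and `K†` is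
compact (Schauder), the same argument applied to `C† + K†` gives the converse. -/

section Banach

variable {𝕜 E F : Type*} [NontriviallyNormedField 𝕜] [NormedAddCommGroup E] [NormedSpace 𝕜 E]
  [CompleteSpace E] [NormedAddCommGroup F] [NormedSpace 𝕜 F]

theorem isUnit_one_add_of_injective {T : E →L[𝕜] E} (hT : IsCompactOperator T)
    (hinj : Function.Injective (1 + T : E →L[𝕜] E)) : IsUnit (1 + T) := by
  rcases hT.hasEigenvalue_or_mem_resolventSet (neg_ne_zero.mpr one_ne_zero) with hev | hres
  · obtain ⟨v, hv⟩ := hev.exists_hasEigenvector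
    have hTv : T v = -v := by simpa only [neg_smul, one_smul] using! hv.apply_eq_smul
    have hker : (1 + T : E →L[𝕜] E) v = 0 := by simp [hTv]
    exact absurd ((injective_iff_map_eq_zero _).mp hinj v hker) hv.2
  · rw [spectrum.mem_resolventSet_iff, ← IsUnit.neg_iff] at hres
    simpa [add_comm] using hres

theorem surjective_add_of_injective {C K : E →L[𝕜] F} (hC : C.IsInvertible)
    (hK : IsCompactOperator K) (hinj : Function.Injective (C + K)) :
    Function.Surjective (C + K) := by
  obtain ⟨e, rfl⟩ := hC
  set T : E →L[𝕜] E := (e.symm : F →L[𝕜] E) ∘L K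
  have hfactor : ⇑((e : E →L[𝕜] F) + K) = e ∘ (1 + T : E →L[𝕜] E) := by
    ext x
    simp [T]
  rw [hfactor] at hinj ⊢
  have hunit : IsUnit (1 + T) :=
    isUnit_one_add_of_injective (hK.clm_comp (e.symm : F →L[𝕜] E)) hinj.of_comp
  exact e.surjective.comp (ContinuousLinearMap.isUnit_iff_bijective.mp hunit).surjective

end Banach

theorem totallyBounded_image_of_dist_control {α β γ : Type*} [PseudoMetricSpace β]
    [PseudoMetricSpace γ] {f : α → β} {g : α → γ} {s : Set α} (hg : TotallyBounded (g '' s))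
    (hfg : ∀ ε > 0, ∃ δ > 0, ∀ x ∈ s, ∀ y ∈ s, dist (g x) (g y) < δ → dist (f x) (f y) < ε) :
    TotallyBounded (f '' s) := by
  rw [Metric.totallyBounded_iff]
  intro ε hε
  obtain ⟨δ, hδ, hdist⟩ := hfg ε hε
  obtain ⟨_, hsub, hfin, hcover⟩ := Metric.finite_approx_of_totallyBounded hg δ hδ
  obtain ⟨t, hts, ht, rfl⟩ := Set.exists_subset_image_finite_and.mp ⟨_, hsub, hfin, rfl⟩
  refine ⟨f '' t, ht.image f, ?_⟩
  rintro _ ⟨x, hx, rfl⟩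
  obtain ⟨y, hy, hxy⟩ : ∃ y ∈ t, dist (g x) (g y) < δ := by
    simpa using hcover ⟨x, hx, rfl⟩
  exact Set.mem_biUnion ⟨y, hy, rfl⟩ (hdist x hx y (hts hy) hxy)

section Hilbert

variable {𝕜 E F : Type*} [RCLike 𝕜] [NormedAddCommGroup E] [InnerProductSpace 𝕜 E]
  [CompleteSpace E] [NormedAddCommGroup F] [InnerProductSpace 𝕜 F] [CompleteSpace F]

open ContinuousLinearMap

theorem norm_apply_sq_le_norm_adjoint_comp_self (A : E →L[𝕜] F) (x : E) :
    ‖A x‖ ^ 2 ≤ ‖(adjoint A ∘L A) x‖ * ‖x‖ :=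
  (apply_norm_sq_eq_inner_adjoint_left A x).trans_le (re_inner_le_norm _ _)

theorem isCompactOperator_of_adjoint_comp_self {A : E →L[𝕜] F}
    (hA : IsCompactOperator (adjoint A ∘L A)) : IsCompactOperator A := by
  have hball : TotallyBounded ((adjoint A ∘L A) '' Metric.ball 0 1) :=
    (IsCompactOperator.isCompact_closure_image_ball
      (f := (adjoint A ∘L A : E →ₗ[𝕜] E)) hA 1).totallyBounded.subset subset_closure
  suffices htb : TotallyBounded (A '' Metric.ball 0 1) from
    (isCompactOperator_iff_isCompact_closure_image_ball (A : E →ₗ[𝕜] F) one_pos).mpr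
      (htb.closure.isCompact_of_isClosed isClosed_closure)
  refine totallyBounded_image_of_dist_control hball fun ε hε ↦
    ⟨ε ^ 2 / 2, by positivity, fun x hx y hy hxy ↦ ?_⟩
  rw [mem_ball_zero_iff] at hx hy
  rw [dist_eq_norm, ← map_sub] at hxy
  have hdiam : ‖x - y‖ ≤ 2 := (norm_sub_le x y).trans (by linarith)
  have hsq : dist (A x) (A y) ^ 2 < ε ^ 2 := by
    calc dist (A x) (A y) ^ 2 = ‖A (x - y)‖ ^ 2 := by rw [dist_eq_norm, map_sub]
      _ ≤ ‖(adjoint A ∘L A) (x - y)‖ * ‖x - y‖ := norm_apply_sq_le_norm_adjoint_comp_self A _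
      _ ≤ ‖(adjoint A ∘L A) (x - y)‖ * 2 := by gcongr
      _ < ε ^ 2 := by linarith
  exact lt_of_pow_lt_pow_left₀ 2 hε.le hsq

theorem isCompactOperator_adjoint {K : E →L[𝕜] F} (hK : IsCompactOperator K) :
    IsCompactOperator (adjoint K) := by
  apply isCompactOperator_of_adjoint_comp_self
  rw [adjoint_adjoint]
  exact hK.comp_clm (adjoint K)

theorem isInvertible_adjoint {C : E →L[𝕜] F} (hC : C.IsInvertible) :
    (adjoint C).IsInvertible := by
  obtain ⟨e, rfl⟩ := hC
  refine .of_inverse (g := adjoint (e.symm : F →L[𝕜] E)) ?_ ?_ <;> simp [← adjoint_comp, adjoint_id]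

theorem injective_adjoint_of_denseRange {B : E →L[𝕜] F} (hB : DenseRange B) :
    Function.Injective (adjoint B) := by
  refine LinearMap.ker_eq_bot.mp ?_
  rw [← orthogonal_range, ← Submodule.topologicalClosure_eq_top_iff]
  exact Submodule.dense_iff_topologicalClosure_eq_top.mp hB

theorem fredholm_injective_iff_adjoint_injective_general {C K : E →L[𝕜] F} (hC : C.IsInvertible)
    (hK : IsCompactOperator K) :
    Function.Injective (C + K) ↔ Function.Injective (adjoint (C + K)) := by
  constructor <;> intro hinj
  · exact injective_adjoint_of_denseRange
      (surjective_add_of_injective hC hK hinj).denseRange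
  · have hsurj : Function.Surjective (adjoint (C + K)) := by
      rw [map_add] at hinj ⊢
      exact surjective_add_of_injective (isInvertible_adjoint hC)
        (isCompactOperator_adjoint hK) hinj
    simpa only [adjoint_adjoint] using injective_adjoint_of_denseRange hsurj.denseRange

end Hilbert

theorem isInvertible_of_coercive {H : Type*} [NormedAddCommGroup H] [InnerProductSpace ℝ H]
    [CompleteSpace H] {C : H →L[ℝ] H} {α : ℝ} (hα : 0 < α)
    (hcoer : ∀ v : H, α * ‖v‖ ^ 2 ≤ ⟪C v, v⟫) : C.IsInvertible := by
  have hbilin : IsCoercive (innerSL ℝ ∘L C) :=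
    ⟨α, hα, fun v ↦ by simpa only [pow_two, mul_assoc] using! hcoer v⟩
  refine ⟨hbilin.continuousLinearEquivOfBilin, ?_⟩
  ext v
  exact (hbilin.unique_continuousLinearEquivOfBilin fun _ ↦ rfl).symm

/-- **Fredholm alternative (uniqueness for the problem and its adjoint).**
Let `B = C + K` where `C` is a coercive continuous linear operator on a real Hilbert
space `H` and `K` is a compact operator, and let `B†` be the Hilbert-space adjoint of
`B`.  Then `B` is injective if and only if `B†` is injective. -/
theorem fredholm_injective_iff_adjoint_injective
    {H : Type*} [NormedAddCommGroup H] [InnerProductSpace ℝ H] [CompleteSpace H]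
    (C K : H →L[ℝ] H)
    (α : ℝ) (hα : 0 < α) (hcoer : ∀ v : H, α * ‖v‖ ^ 2 ≤ ⟪C v, v⟫)
    (hK : IsCompactOperator K) (B : H →L[ℝ] H) (hB : B = C + K) :
    Function.Injective B ↔ Function.Injective (ContinuousLinearMap.adjoint B) := by
  subst hB
  exact fredholm_injective_iff_adjoint_injective_general (isInvertible_of_coercive hα hcoer) hK
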